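/- arXiv:1703.04422 — 2 statements merged into one kernel-verified Lean document; each statement's English description precedes it below -/
import Mathlib

section
/- Let X ⊆ ℕ^d be a monotone set, and let A = (A_1,…,A_d) be a commuting d-tuple of bounded operators on a Hilbert space H with ∑_{j=1}^d ‖A_j h‖² ≤ r² ‖h‖² for all h ∈ H, for some 0 < r < 1, and defect operator D = (I − ∑_j A_j^* A_j)^{1/2}. Then the following are equivalent: (i) ∑_{n∈X} β(n) ‖D A^n h‖² = ‖h‖² for every h ∈ H (i.e. the map h ↦ (D A^n h)_{n∈X} is an isometry of H into the β-weighted ℓ² space of H-valued families over X); (ii) A^n = 0 for every n ∈ ℕ^d∖X. -/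
open scoped BigOperators ComplexConjugate

noncomputable section

namespace DruryArveson

/-- Multi-indices. -/
abbrev Idx (d : ℕ) := Fin d → ℕ

/-- The weight `β(n) = |n|!/n!`. -/
def beta (d : ℕ) (n : Idx d) : ℝ :=
  ((∑ j, n j).factorial : ℝ) / ∏ j, ((n j).factorial : ℝ)

/-- standard basis multi-index `e_j`. -/
def e (d : ℕ) (j : Fin d) : Idx d := fun i => if i = j then 1 else 0

/-- A set `X ⊆ ℕ^d` is monotone if its complement is shift invariant. -/
def MonotoneSet (d : ℕ) (X : Set (Idx d)) : Prop :=
  ∀ n, n ∉ X → ∀ j, n + e d j ∉ X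

/-- membership in the Drury–Arveson space (coefficientwise). -/
def MemHd (d : ℕ) (a : Idx d → ℂ) : Prop :=
  Summable fun n => ‖a n‖ ^ 2 / beta d n

/-- the Drury–Arveson norm. -/
def hdNorm (d : ℕ) (a : Idx d → ℂ) : ℝ :=
  Real.sqrt (∑' n, ‖a n‖ ^ 2 / beta d n)

/-- the Drury–Arveson inner product. -/
def hdInner (d : ℕ) (a b : Idx d → ℂ) : ℂ :=
  ∑' n, a n * conj (b n) / (beta d n : ℂ)

/-- membership in `H_d(X)`. -/
def MemHdX (d : ℕ) (X : Set (Idx d)) (a : Idx d → ℂ) : Prop :=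
  (∀ n ∉ X, a n = 0) ∧ MemHd d a

/-- membership in `ℓ²(X, β)`. -/
def MemL2 (d : ℕ) (X : Set (Idx d)) (g : Idx d → ℂ) : Prop :=
  (∀ n ∉ X, g n = 0) ∧ Summable fun n => ‖g n‖ ^ 2 * beta d n

/-- the norm of `ℓ²(ℕ^d, β)`. -/
def l2Norm (d : ℕ) (g : Idx d → ℂ) : ℝ :=
  Real.sqrt (∑' n, ‖g n‖ ^ 2 * beta d n)

/-- the inner product of `ℓ²(ℕ^d, β)`. -/
def l2Inner (d : ℕ) (g h : Idx d → ℂ) : ℂ :=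
  ∑' n, g n * conj (h n) * (beta d n : ℂ)

/-- the compressed backshift `B_j^X = P_X B_j|_{ℓ²(X,β)}`. -/
def BXop (d : ℕ) (X : Set (Idx d)) (j : Fin d) (g : Idx d → ℂ) : Idx d → ℂ :=
  X.indicator fun n => g (n + e d j)

/-- ordered power `(T_1)^{k_1} ∘ ⋯ ∘ (T_d)^{k_d}` of a `d`-tuple of maps. -/
def opPow (d : ℕ) {α : Type*} (T : Fin d → (α → α)) (k : Idx d) : α → α :=
  (List.ofFn fun j => (T j)^[k j]).foldr (· ∘ ·) id

/-- multiplication by `z_j` on coefficients. -/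
def Mop (d : ℕ) (j : Fin d) (a : Idx d → ℂ) : Idx d → ℂ :=
  fun n => if 0 < n j then a (n - e d j) else 0

/-- the compressed multiplication `M_j^X = P_X M_j|_{H_d(X)}`. -/
def MopX (d : ℕ) (X : Set (Idx d)) (j : Fin d) (a : Idx d → ℂ) : Idx d → ℂ :=
  X.indicator (Mop d j a)

/-- the Taylor coefficients of a polynomial of `d` variables. -/
def Qhat (d : ℕ) (Q : MvPolynomial (Fin d) ℂ) (n : Idx d) : ℂ :=
  Q.coeff (Finsupp.equivFunOnFinite.symm n)

/-- `Q(T)` for a `d`-tuple of maps on the coefficient space. -/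
def polyOp (d : ℕ) (Q : MvPolynomial (Fin d) ℂ)
    (T : Fin d → ((Idx d → ℂ) → (Idx d → ℂ))) (a : Idx d → ℂ) : Idx d → ℂ :=
  fun n => ∑ k ∈ Q.support, Q.coeff k * opPow d T (⇑k) a n

/-- operator norm of a map with respect to the `ℓ²(X,β)` norm. -/
def opNormL2 (d : ℕ) (X : Set (Idx d)) (T : (Idx d → ℂ) → (Idx d → ℂ)) : ℝ :=
  sInf {C | 0 ≤ C ∧ ∀ g, MemL2 d X g → l2Norm d (T g) ≤ C * l2Norm d g}

/-- operator norm of a map with respect to the `H_d(X)` norm. -/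
def opNormHdX (d : ℕ) (X : Set (Idx d)) (T : (Idx d → ℂ) → (Idx d → ℂ)) : ℝ :=
  sInf {C | 0 ≤ C ∧ ∀ a, MemHdX d X a → hdNorm d (T a) ≤ C * hdNorm d a}

/-- coefficients of the product `φ · f` of two power series. -/
def mconv (d : ℕ) (φ a : Idx d → ℂ) (m : Idx d) : ℂ :=
  ∑ k ∈ Finset.Iic m, φ k * a (m - k)

/-- `φ` is a multiplier of `H_d`. -/
def IsMultiplier (d : ℕ) (φ : Idx d → ℂ) : Prop :=
  ∀ a, MemHd d a → MemHd d (mconv d φ a)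

/-- the multiplier norm `‖φ‖_{M(H_d)}`. -/
def multNorm (d : ℕ) (φ : Idx d → ℂ) : ℝ :=
  sInf {C | 0 ≤ C ∧ ∀ a, MemHd d a → hdNorm d (mconv d φ a) ≤ C * hdNorm d a}

/-- `A^n = A_1^{n_1} ⋯ A_d^{n_d}` for a tuple of bounded operators. -/
def ApowCLM (d : ℕ) {H : Type*} [NormedAddCommGroup H] [NormedSpace ℂ H]
    (A : Fin d → H →L[ℂ] H) (n : Idx d) : H →L[ℂ] H :=
  (List.ofFn fun j => A j ^ n j).prod

/-- `Q(A) = ∑ c_k A^k` for a tuple of bounded operators. -/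
def QevalCLM (d : ℕ) {H : Type*} [NormedAddCommGroup H] [NormedSpace ℂ H]
    (A : Fin d → H →L[ℂ] H) (Q : MvPolynomial (Fin d) ℂ) : H →L[ℂ] H :=
  ∑ k ∈ Q.support, Q.coeff k • ApowCLM d A ⇑k

/-- monomial `z^n`. -/
def mpow (d : ℕ) (z : Fin d → ℂ) (n : Idx d) : ℂ := ∏ j, z j ^ n j


/-!
For a tuple `A` with defect operator `D`, put `S k = ∑_{|n| = k} β(n) ‖Aⁿ h‖²`. The multinomial
recursion gives `∑_{|n| = k} β(n) ‖D Aⁿ h‖² = S k - S (k + 1)`, so the sum over all of `ℕ^d`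
telescopes to `S 0 - lim S k`, which is `‖h‖²` because `S k ≤ r ^ (2 * k) * ‖h‖²`. A subfamily of
these nonnegative terms therefore has sum `‖h‖²` exactly when all the other terms vanish, and
`D Aⁿ h = 0` forces `Aⁿ h = 0` because `D` is injective: `‖D h‖² ≥ (1 - r²) ‖h‖²`.
-/

open Filter Finset Topology

section Combinatorics

variable {ι M : Type*} [Fintype ι] [DecidableEq ι]

theorem sum_piAntidiag_succ_multinomial_nsmul [AddCommMonoid M] (φ : (ι → ℕ) → M) (k : ℕ) :
    ∑ n ∈ piAntidiag univ (k + 1), Nat.multinomial univ n • φ n =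
      ∑ n ∈ piAntidiag univ k, Nat.multinomial univ n • ∑ j, φ (n + Pi.single j 1) := by
  -- Compare coefficients in `(∑ j, x_j) ^ (k + 1) = (∑ j, x_j) ^ k * ∑ j, x_j`, by applying the
  -- additive functional that sends the monomial `x ^ n` to `φ n`.
  let x (n : ι → ℕ) : AddMonoidAlgebra ℕ (ι → ℕ) := AddMonoidAlgebra.single n 1
  let L : AddMonoidAlgebra ℕ (ι → ℕ) →ₗ[ℕ] M :=
    Finsupp.linearCombination ℕ φ ∘ₗ (AddMonoidAlgebra.coeffLinearEquiv ℕ).toLinearMap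
  have hL (n : ι → ℕ) : L (x n) = φ n := by simp [L, x]
  have hx_add (m n : ι → ℕ) : x m * x n = x (m + n) := by
    simp [x, AddMonoidAlgebra.single_mul_single]
  have hx_prod (n : ι → ℕ) : ∏ j, x (Pi.single j 1) ^ n j = x n := by
    simp [x, AddMonoidAlgebra.single_pow, AddMonoidAlgebra.prod_single, ← Pi.single_smul,
      univ_sum_single]
  have multinomial_theorem (k : ℕ) : (∑ j, x (Pi.single j 1)) ^ k =
      ∑ n ∈ piAntidiag univ k, Nat.multinomial univ n • x n := by
    simp only [sum_pow_eq_sum_piAntidiag, hx_prod, nsmul_eq_mul]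
  calc ∑ n ∈ piAntidiag univ (k + 1), Nat.multinomial univ n • φ n
      = L ((∑ j, x (Pi.single j 1)) ^ (k + 1)) := by
        simp only [multinomial_theorem, map_sum, map_nsmul, hL]
    _ = L (∑ n ∈ piAntidiag univ k, Nat.multinomial univ n • ∑ j, x (n + Pi.single j 1)) := by
        rw [pow_succ, multinomial_theorem, sum_mul]
        simp only [smul_mul_assoc, mul_sum, smul_sum, hx_add]
    _ = ∑ n ∈ piAntidiag univ k, Nat.multinomial univ n • ∑ j, φ (n + Pi.single j 1) := by
        simp only [map_sum, map_nsmul, hL]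

end Combinatorics

theorem prod_ofFn_pow_add_single {M : Type*} [Monoid M] {d : ℕ} {a : Fin d → M}
    (ha : ∀ i j, Commute (a i) (a j)) (n : Fin d → ℕ) (j : Fin d) :
    (List.ofFn fun i => a i ^ (n + Pi.single j 1 : Fin d → ℕ) i).prod =
      a j * (List.ofFn fun i => a i ^ n i).prod := by
  induction d with
  | zero => exact j.elim0
  | succ d ih =>
    simp only [List.ofFn_succ, List.prod_cons]
    cases j using Fin.cases with
    | zero => simp [pow_succ', mul_assoc]
    | succ j =>
      have head_exponent : (n + Pi.single j.succ 1 : Fin (d + 1) → ℕ) 0 = n 0 := by simp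
      have tail_exponent (i : Fin d) : (n + Pi.single j.succ 1 : Fin (d + 1) → ℕ) i.succ =
          ((fun i => n i.succ) + Pi.single j 1 : Fin d → ℕ) i := by
        simp [Pi.single_apply]
      simp only [head_exponent, tail_exponent, ih (fun i k => ha i.succ k.succ)]
      exact ((ha 0 j.succ).pow_left (n 0)).left_comm _

section Summation

variable {α κ : Type*} {f : α → ℝ} {a : ℝ}

theorem hasSum_of_hasSum_sum_finset_partition (hf : ∀ x, 0 ≤ f x) {s : κ → Finset α}
    (hs : ∀ x, ∃! k, x ∈ s k) (h : HasSum (fun k => ∑ x ∈ s k, f x) a) : HasSum f a := by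
  have hfiber (k : κ) : HasSum (fun x : (s k : Set α) => f x) (∑ x ∈ s k, f x) :=
    (s k).hasSum f
  have hsummable : Summable f := (summable_partition hf (s := fun k => (s k : Set α)) hs).2
    ⟨fun k => (hfiber k).summable, by simpa only [(hfiber _).tsum_eq] using h.summable⟩
  let σ := Set.sigmaEquiv (fun k => (s k : Set α)) hs
  exact σ.hasSum_iff.1 <| h.sigma_of_hasSum hfiber (σ.summable_iff.2 hsummable)

theorem hasSum_subtype_iff_forall_notMem_eq_zero (hf : ∀ x, 0 ≤ f x) (h : HasSum f a)
    (s : Set α) : HasSum (fun x : s => f x) a ↔ ∀ x ∉ s, f x = 0 := by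
  refine ⟨fun hs x hx => ?_, fun hzero => ?_⟩
  · have hcompl : HasSum (fun x : (sᶜ : Set α) => f x) 0 :=
      (HasSum.hasSum_compl_iff (f := f) hs).2 (by rwa [add_zero])
    have hzero := (hasSum_zero_iff_of_nonneg fun x : (sᶜ : Set α) => hf x).1 hcompl
    exact congrFun hzero ⟨x, hx⟩
  · exact (hasSum_subtype_iff_of_support_subset (Function.support_subset_iff'.2 hzero)).2 h

end Summation

theorem beta_eq_multinomial (d : ℕ) (n : Idx d) : beta d n = Nat.multinomial univ n := by
  rw [beta, div_eq_iff (by positivity), ← Nat.multinomial_spec univ n]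
  push_cast
  exact mul_comm _ _

theorem beta_pos (d : ℕ) (n : Idx d) : 0 < beta d n := by
  rw [beta_eq_multinomial]
  exact_mod_cast Nat.multinomial_pos univ n

section Normed

variable {d : ℕ} {H K : Type*} [NormedAddCommGroup H] [NormedSpace ℂ H]
  [NormedAddCommGroup K] [NormedSpace ℂ K] {A : Fin d → H →L[ℂ] H}

theorem ApowCLM_zero : ApowCLM d A 0 = 1 := by
  simp [ApowCLM]

theorem ApowCLM_add_single (hA : ∀ i j, Commute (A i) (A j)) (n : Idx d) (j : Fin d) (h : H) :
    ApowCLM d A (n + Pi.single j 1) h = A j (ApowCLM d A n h) :=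
  congrArg (· h) (prod_ofFn_pow_add_single hA n j)

/-- The sum `∑_{|n| = k} β(n) ‖Aⁿ h‖²` over the multi-indices of degree `k`. On a Hilbert space
this is `⟪Φᵏ(I) h, h⟫` for the completely positive map `Φ(T) = ∑_j A_j^* T A_j`. -/
def levelEnergy (A : Fin d → H →L[ℂ] H) (h : H) (k : ℕ) : ℝ :=
  ∑ n ∈ piAntidiag univ k, beta d n * ‖ApowCLM d A n h‖ ^ 2

theorem levelEnergy_nonneg (A : Fin d → H →L[ℂ] H) (h : H) (k : ℕ) : 0 ≤ levelEnergy A h k :=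
  sum_nonneg fun n _ => mul_nonneg (beta_pos d n).le (sq_nonneg _)

theorem levelEnergy_zero (A : Fin d → H →L[ℂ] H) (h : H) : levelEnergy A h 0 = ‖h‖ ^ 2 := by
  simp [levelEnergy, beta, ApowCLM_zero]

theorem levelEnergy_succ (hA : ∀ i j, Commute (A i) (A j)) (h : H) (k : ℕ) :
    levelEnergy A h (k + 1) =
      ∑ n ∈ piAntidiag univ k, beta d n * ∑ j, ‖A j (ApowCLM d A n h)‖ ^ 2 := by
  simpa only [levelEnergy, beta_eq_multinomial, ← nsmul_eq_mul, ApowCLM_add_single hA] using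
    sum_piAntidiag_succ_multinomial_nsmul (fun n => ‖ApowCLM d A n h‖ ^ 2) k

/-- Purity of a tuple: `∑_{|n| = k} β(n) ‖Aⁿ h‖² → 0` as `k → ∞` for every vector `h`, so that no
norm escapes to infinity when the defects of the vectors `Aⁿ h` are summed. -/
def IsPure (A : Fin d → H →L[ℂ] H) : Prop :=
  ∀ h, Tendsto (levelEnergy A h) atTop (𝓝 0)

theorem IsPure.of_sum_sq_norm_le {c : ℝ} (hc0 : 0 ≤ c) (hc1 : c < 1)
    (hA : ∀ i j, Commute (A i) (A j)) (hrow : ∀ h, ∑ j, ‖A j h‖ ^ 2 ≤ c * ‖h‖ ^ 2) :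
    IsPure A := by
  intro h
  have contract (k : ℕ) : levelEnergy A h (k + 1) ≤ c * levelEnergy A h k := by
    rw [levelEnergy_succ hA, levelEnergy, mul_sum]
    refine sum_le_sum fun n _ => ?_
    rw [mul_left_comm]
    exact mul_le_mul_of_nonneg_left (hrow _) (beta_pos d n).le
  have geometric (k : ℕ) : levelEnergy A h k ≤ c ^ k * levelEnergy A h 0 :=
    le_geom hc0 k fun i _ => contract i
  refine squeeze_zero (levelEnergy_nonneg A h) geometric ?_
  simpa using (tendsto_pow_atTop_nhds_zero_of_lt_one hc0 hc1).mul_const (levelEnergy A h 0)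

/-- `D` is a defect operator of the tuple `A`. The identity `D^* D = I - ∑_j A_j^* A_j` is encoded
by its quadratic form, so that no adjoints are needed and `D` may take values in another space. -/
def IsDefectOperator (A : Fin d → H →L[ℂ] H) (D : H →L[ℂ] K) : Prop :=
  ∀ h, ‖D h‖ ^ 2 = ‖h‖ ^ 2 - ∑ j, ‖A j h‖ ^ 2

namespace IsDefectOperator

variable {D : H →L[ℂ] K}

theorem injective_of_sum_sq_norm_le (hD : IsDefectOperator A D) {c : ℝ} (hc : c < 1)
    (hrow : ∀ h, ∑ j, ‖A j h‖ ^ 2 ≤ c * ‖h‖ ^ 2) : Function.Injective D := by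
  refine (injective_iff_map_eq_zero D).2 fun h hDh => ?_
  have hnorm : ‖h‖ ^ 2 = ∑ j, ‖A j h‖ ^ 2 := sub_eq_zero.1 (by simpa [hDh] using (hD h).symm)
  have : ‖h‖ ^ 2 = 0 := by nlinarith [hrow h, sq_nonneg ‖h‖]
  simpa using this

theorem sum_beta_mul_sq_norm (hD : IsDefectOperator A D) (hA : ∀ i j, Commute (A i) (A j))
    (h : H) (k : ℕ) :
    ∑ n ∈ piAntidiag univ k, beta d n * ‖D (ApowCLM d A n h)‖ ^ 2 =
      levelEnergy A h k - levelEnergy A h (k + 1) := by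
  simp only [levelEnergy_succ hA, hD _, mul_sub, sum_sub_distrib]
  rfl

theorem hasSum_beta_mul_sq_norm (hD : IsDefectOperator A D) (hA : ∀ i j, Commute (A i) (A j))
    (hpure : IsPure A) (h : H) :
    HasSum (fun n => beta d n * ‖D (ApowCLM d A n h)‖ ^ 2) (‖h‖ ^ 2) := by
  have hnonneg (n : Idx d) : 0 ≤ beta d n * ‖D (ApowCLM d A n h)‖ ^ 2 :=
    mul_nonneg (beta_pos d n).le (sq_nonneg _)
  refine hasSum_of_hasSum_sum_finset_partition hnonneg (s := piAntidiag univ) (by simp) ?_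
  rw [hasSum_iff_tendsto_nat_of_nonneg fun k => sum_nonneg fun n _ => hnonneg n]
  simp only [hD.sum_beta_mul_sq_norm hA, sum_range_sub', levelEnergy_zero]
  simpa using (hpure h).const_sub (‖h‖ ^ 2)

end IsDefectOperator

theorem defect_isometry_iff_vanishing_general (X : Set (Idx d))
    (hA : ∀ i j, Commute (A i) (A j)) (hpure : IsPure A) {D : H →L[ℂ] K}
    (hD : IsDefectOperator A D) (hDinj : Function.Injective D) :
    (∀ h : H, HasSum (fun n : X => beta d n * ‖D (ApowCLM d A n h)‖ ^ 2) (‖h‖ ^ 2)) ↔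
      ∀ n ∉ X, ApowCLM d A n = 0 := by
  have vanish (h : H) (n : Idx d) :
      beta d n * ‖D (ApowCLM d A n h)‖ ^ 2 = 0 ↔ ApowCLM d A n h = 0 := by
    simp [(beta_pos d n).ne', map_eq_zero_iff D hDinj]
  have isometry (h : H) := hasSum_subtype_iff_forall_notMem_eq_zero
    (fun n => mul_nonneg (beta_pos d n).le (sq_nonneg _)) (hD.hasSum_beta_mul_sq_norm hA hpure h) X
  simp only [isometry, vanish, ContinuousLinearMap.ext_iff, zero_apply]
  exact ⟨fun hvanish n hn h => hvanish h n hn, fun hvanish h n hn => hvanish n hn h⟩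

end Normed

theorem IsDefectOperator.of_adjoint_comp_self {d : ℕ} {H K : Type*}
    [NormedAddCommGroup H] [InnerProductSpace ℂ H] [CompleteSpace H]
    [NormedAddCommGroup K] [InnerProductSpace ℂ K] [CompleteSpace K]
    {A : Fin d → H →L[ℂ] H} {D : H →L[ℂ] K}
    (hD : D.adjoint ∘L D = 1 - ∑ j, (A j).adjoint ∘L A j) : IsDefectOperator A D := by
  intro h
  rw [ContinuousLinearMap.apply_norm_sq_eq_inner_adjoint_left, hD]
  simp [inner_sub_left, sum_inner, ContinuousLinearMap.adjoint_inner_left,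
    inner_self_eq_norm_sq_to_K, ← Complex.ofReal_pow]

/-- Let `X ⊆ ℕ^d` be monotone and `A` a commuting `d`-tuple of bounded
operators on a complex Hilbert space `H` with `∑_j ‖A_j h‖² ≤ r² ‖h‖²` for some
`0 < r < 1`, with defect operator `D = (I - ∑_j A_j^* A_j)^{1/2}`.  Then
`h ↦ (D A^n h)_{n ∈ X}` is an isometry into the β-weighted `ℓ²` space of `H`-valued
families over `X` (i.e. `∑_{n ∈ X} β(n) ‖D A^n h‖² = ‖h‖²` for all `h`) if and only if
`A^n = 0` for every `n ∈ ℕ^d ∖ X`. -/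
theorem defect_isometry_iff_vanishing (d : ℕ) (X : Set (Idx d)) (hX : MonotoneSet d X)
    {H : Type*} [NormedAddCommGroup H] [InnerProductSpace ℂ H] [CompleteSpace H]
    (A : Fin d → H →L[ℂ] H)
    (hcomm : ∀ i j, A i ∘L A j = A j ∘L A i)
    (r : ℝ) (hr0 : 0 < r) (hr1 : r < 1)
    (hrow : ∀ h : H, ∑ j, ‖A j h‖ ^ 2 ≤ r ^ 2 * ‖h‖ ^ 2)
    (D : H →L[ℂ] H) (hDpos : D.IsPositive)
    (hDsq : D ∘L D = 1 - ∑ j, (ContinuousLinearMap.adjoint (A j)) ∘L A j) :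
    (∀ h : H, HasSum (fun n : X => beta d n * ‖D (ApowCLM d A n h)‖ ^ 2) (‖h‖ ^ 2)) ↔
    (∀ n ∉ X, ApowCLM d A n = 0) := by
  have hr : r ^ 2 < 1 := pow_lt_one₀ hr0.le hr1 two_ne_zero
  have hD : IsDefectOperator A D :=
    .of_adjoint_comp_self (by rwa [hDpos.isSelfAdjoint.adjoint_eq])
  exact defect_isometry_iff_vanishing_general X hcomm
    (.of_sum_sq_norm_le (sq_nonneg r) hr hcomm hrow) hD (hD.injective_of_sum_sq_norm_le hr hrow)

end DruryArveson
end
end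

section
/- Let X ⊆ ℕ^d be a nonempty monotone set. Then for every n ∈ ℕ^d, the operator (B^X)^n on ℓ²(X,β) is zero if and only if n ∈ ℕ^d∖X. In particular {n ∈ ℕ^d : (B^X)^n = 0} = ℕ^d∖X. -/
open scoped BigOperators ComplexConjugate

noncomputable section

namespace DruryArveson

/-!
If `g` is supported in a lower set `X`, then so are all its backward translates `g (· + n)`.
Hence the compressions `P_X` act trivially along the orbit of `g`, and `(B^X)^n g = g (· + n)`.
Evaluated at `m`, this vanishes when `n ∉ X`, because then `m + n ∉ X`; when `n ∈ X`, it takes the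
value `1` at `0` for `g` the point mass at `n`.
-/

variable {d : ℕ} {X : Set (Idx d)}

theorem e_eq_single (j : Fin d) : e d j = Pi.single j 1 :=
  funext fun i => (Pi.single_apply j 1 i).symm

theorem sum_smul_e (k : Idx d) : ∑ j, k j • e d j = k := by
  simp only [e_eq_single, ← Pi.single_smul', smul_eq_mul, mul_one, Finset.univ_sum_single]

theorem MonotoneSet.add_notMem (hX : MonotoneSet d X) {n : Idx d} (hn : n ∉ X) (k : Idx d) :
    n + k ∉ X := by
  induction k using Pi.single_induction generalizing n with
  | zero => rwa [add_zero]
  | add k l ihk ihl =>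
    rw [← add_assoc]
    exact ihl (ihk hn)
  | single j c =>
    induction c with
    | zero => rwa [Pi.single_zero, add_zero]
    | succ c ih =>
      rw [Pi.single_add, ← add_assoc, ← e_eq_single]
      exact hX _ ih j

theorem monotoneSet_iff_isLowerSet : MonotoneSet d X ↔ IsLowerSet X := by
  refine ⟨fun hX n m hmn hn => ?_, fun hX n hn j hj => hn (hX le_self_add hj)⟩
  obtain ⟨k, rfl⟩ := exists_add_of_le hmn
  by_contra hm
  exact hX.add_notMem hm k hn

theorem opPow_succ {α : Type*} (T : Fin (d + 1) → α → α) (k : Idx (d + 1)) :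
    opPow (d + 1) T k = (T 0)^[k 0] ∘ opPow d (fun j => T j.succ) (fun j => k j.succ) := by
  simp only [opPow, List.ofFn_succ, List.foldr_cons]

theorem semiconj_opPow {M α : Type*} [AddCommMonoid M] {F : M → α} {a : Fin d → M}
    {T : Fin d → α → α} (h : ∀ j, Function.Semiconj F (· + a j) (T j)) (k : Idx d) :
    Function.Semiconj F (· + ∑ j, k j • a j) (opPow d T k) := by
  induction d with
  | zero => simp [Function.Semiconj, opPow]
  | succ d ih =>
    have hzero : Function.Semiconj F (· + k 0 • a 0) (T 0)^[k 0] := by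
      simpa only [add_right_iterate] using (h 0).iterate_right (k 0)
    have hsucc := ih (fun j => h j.succ) (fun j => k j.succ)
    rw [opPow_succ, Fin.sum_univ_succ, add_comm (k 0 • a 0)]
    simpa only [Function.comp_def, add_assoc] using hzero.comp_right hsucc

/-- The uncompressed backshift `B^n = B_1^{n_1} ⋯ B_d^{n_d}`, written as translation by `n`. -/
def backshift (n : Idx d) (g : Idx d → ℂ) : Idx d → ℂ := fun m => g (m + n)

theorem BXop_backshift (hX : IsLowerSet X) {g : Idx d → ℂ} (hg : ∀ m ∉ X, g m = 0) (j : Fin d)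
    (n : Idx d) : BXop d X j (backshift n g) = backshift (n + e d j) g := by
  have hsupp : Function.support (backshift (n + e d j) g) ⊆ X := fun m hm => by
    by_contra hmX
    exact hm (hg _ fun h => hmX (hX le_self_add h))
  calc BXop d X j (backshift n g)
    _ = X.indicator (backshift (n + e d j) g) := by
        unfold BXop backshift
        simp only [add_assoc, add_comm (e d j)]
    _ = backshift (n + e d j) g := Set.indicator_eq_self.mpr hsupp

theorem opPow_BXop (hX : IsLowerSet X) {g : Idx d → ℂ} (hg : ∀ m ∉ X, g m = 0) (n : Idx d) :
    opPow d (BXop d X) n g = backshift n g := by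
  have hconj : ∀ j, Function.Semiconj (backshift · g) (· + e d j) (BXop d X j) :=
    fun j m => (BXop_backshift hX hg j m).symm
  calc opPow d (BXop d X) n g
    _ = opPow d (BXop d X) n (backshift 0 g) := rfl
    _ = backshift (0 + ∑ j, n j • e d j) g := (semiconj_opPow hconj n 0).symm
    _ = backshift n g := by rw [sum_smul_e, zero_add]

theorem memL2_single {n : Idx d} (hn : n ∈ X) (c : ℂ) : MemL2 d X (Pi.single n c) := by
  refine ⟨fun m hm => Pi.single_eq_of_ne (ne_of_mem_of_not_mem hn hm).symm _, ?_⟩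
  refine summable_of_ne_finset_zero (s := {n}) fun m hm => ?_
  simp [Pi.single_eq_of_ne (Finset.notMem_singleton.mp hm)]

/-- For a nonempty monotone set `X ⊆ ℕ^d` and any `n ∈ ℕ^d`, the
operator `(B^X)^n` on `ℓ²(X,β)` is zero if and only if `n ∉ X`; in particular
`{n : (B^X)^n = 0} = ℕ^d ∖ X`. -/
theorem backshift_power_zero_iff (d : ℕ) (X : Set (Idx d)) (hX : MonotoneSet d X)
    (hne : X.Nonempty) :
    ∀ n : Idx d, (∀ g, MemL2 d X g → opPow d (BXop d X) n g = 0) ↔ n ∉ X := by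
  have hlow : IsLowerSet X := monotoneSet_iff_isLowerSet.mp hX
  refine fun n => ⟨fun hzero hn => ?_, fun hn g hg => ?_⟩
  · have hδ := memL2_single hn 1
    have hval : backshift n (Pi.single n (1 : ℂ)) 0 = 0 := by
      rw [← opPow_BXop hlow hδ.1, hzero _ hδ, Pi.zero_apply]
    simp [backshift] at hval
  · rw [opPow_BXop hlow hg.1]
    exact funext fun m => hg.1 _ fun hmn => hn (hlow le_add_self hmn)

end DruryArveson
end
end
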